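/- Let k, B ∈ ℕ and let a_1,…,a_ℓ be positive integers with Σ_{i=1}^{ℓ} a_i = k·B. Let I be the unweighted delivery instance with k agents whose topology is obtained from a hub vertex h by attaching, for each i ∈ [ℓ], a vertex-disjoint path P_i on a_i vertices whose first vertex is adjacent to h. Then MMS(I) ≤ B if and only if there exists an assignment α : [ℓ] → [k] such that Σ_{i : α(i)=j} a_i = B for every j ∈ [k]. -/

import Mathlib

/-- A delivery instance: a finite tree rooted at the hub (encoded by a parent
function `par`; the edges of the tree are the pairs `{v, par v}` for `v ≠ hub`),
positive edge weights (`w v` is the weight of the edge between `v` and its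
parent, for `v ≠ hub`), and `n` agents. -/
structure DeliveryInstance where
  V : Type
  fintypeV : Fintype V
  decEqV : DecidableEq V
  hub : V
  par : V → V
  w : V → ℝ
  par_hub : par hub = hub
  reaches_hub : ∀ v : V, ∃ k : ℕ, par^[k] v = hub
  w_pos : ∀ v : V, v ≠ hub → 0 < w v
  n : ℕ
  n_pos : 0 < n

attribute [instance] DeliveryInstance.fintypeV DeliveryInstance.decEqV

namespace DeliveryInstance

variable (I : DeliveryInstance)

/-- `u` lies on the path from the hub to `v` (equivalently, `u` is a weak
ancestor of `v` in the tree rooted at the hub). -/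
def Anc (u v : I.V) : Prop := ∃ k : ℕ, I.par^[k] v = u

/-- A leaf of the tree rooted at the hub: a vertex with no children. -/
def IsLeaf (v : I.V) : Prop := ∀ u : I.V, I.par u = v → u = v

/-- The set of leaves of the topology. -/
def leaves : Set I.V := {v : I.V | I.IsLeaf v}

/-- The instance is unweighted if every edge has weight 1. -/
def Unweighted : Prop := ∀ v : I.V, v ≠ I.hub → I.w v = 1

/-- The cost of servicing a set `A` of orders: the total weight of the edges of
the tree that lie on the path from the hub to some vertex of `A` (the edge
between `u ≠ hub` and its parent lies on such a path iff `u` is a weak ancestor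
of a member of `A`).  In particular `cost ∅ = 0`. -/
noncomputable def cost (A : Set I.V) : ℝ :=
  ∑ u : I.V, Set.indicator {u : I.V | u ≠ I.hub ∧ ∃ v ∈ A, I.Anc u v} I.w u

/-- The bundle of agent `i` under allocation `π`: the set of orders serviced by `i`. -/
def bundle (π : I.V → Fin I.n) (i : Fin I.n) : Set I.V :=
  {v : I.V | v ≠ I.hub ∧ π v = i}

/-- An allocation is non-wasteful if every order `v` is serviced by an agent
that also services some leaf of the subtree rooted at `v`. -/
def NonWasteful (π : I.V → Fin I.n) : Prop :=
  ∀ v : I.V, v ≠ I.hub → ∃ l : I.V, I.IsLeaf l ∧ I.Anc v l ∧ π l = π v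

/-- Total (utilitarian) cost of an allocation. -/
noncomputable def totalCost (π : I.V → Fin I.n) : ℝ :=
  ∑ i : Fin I.n, I.cost (I.bundle π i)

/-- The maximum bundle cost of an allocation. -/
noncomputable def maxCost (π : I.V → Fin I.n) : ℝ :=
  Finset.univ.sup' ⟨⟨0, I.n_pos⟩, Finset.mem_univ _⟩ fun i : Fin I.n => I.cost (I.bundle π i)

/-- The minimax (MMS) share of the instance: the minimum over all allocations
of the maximum bundle cost. -/
noncomputable def MMSshare : ℝ :=
  Finset.univ.inf' ⟨fun _ => ⟨0, I.n_pos⟩, Finset.mem_univ _⟩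
    fun π : I.V → Fin I.n => I.maxCost π

/-- An allocation is MMS if every bundle costs at most the MMS share. -/
def IsMMS (π : I.V → Fin I.n) : Prop :=
  ∀ i : Fin I.n, I.cost (I.bundle π i) ≤ I.MMSshare

/-- Pareto optimality: no allocation makes every agent weakly better off and
some agent strictly better off. -/
def ParetoOptimal (π : I.V → Fin I.n) : Prop :=
  ¬ ∃ π' : I.V → Fin I.n,
      (∀ i : Fin I.n, I.cost (I.bundle π' i) ≤ I.cost (I.bundle π i)) ∧
      ∃ j : Fin I.n, I.cost (I.bundle π' j) < I.cost (I.bundle π j)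

/-- Utilitarian optimality: minimizes the sum of bundle costs. -/
def UtilitarianOptimal (π : I.V → Fin I.n) : Prop :=
  ∀ π' : I.V → Fin I.n, I.totalCost π ≤ I.totalCost π'

/-- Egalitarian optimality: minimizes the maximum bundle cost. -/
def EgalitarianOptimal (π : I.V → Fin I.n) : Prop :=
  ∀ π' : I.V → Fin I.n, I.maxCost π ≤ I.maxCost π'

/-- Envy-freeness. -/
def EF (π : I.V → Fin I.n) : Prop :=
  ∀ i j : Fin I.n, I.cost (I.bundle π i) ≤ I.cost (I.bundle π j)

/-- Envy-freeness up to one order. -/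
def EF1 (π : I.V → Fin I.n) : Prop :=
  ∀ i j : Fin I.n,
    I.bundle π i = ∅ ∨ ∃ v ∈ I.bundle π i, I.cost (I.bundle π i \ {v}) ≤ I.cost (I.bundle π j)

end DeliveryInstance

/-!
The argument works for arbitrary edge weights. An allocation that sends each path wholly to one
agent costs every agent the total weight of the paths assigned to it. Conversely, an agent that
serves the far end of a path traverses the entire path, so assigning each path to the agent serving
its far end raises no cost. Hence `MMS(I) ≤ c` iff the paths can be distributed over the agents with
every load at most `c`; when the loads average to `c`, they must then all equal `c`.
-/

theorem forall_sum_fiber_le_iff_forall_eq {ι κ M : Type*} [Fintype ι] [Fintype κ] [DecidableEq κ]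
    [AddCommMonoid M] [PartialOrder M] [IsOrderedCancelAddMonoid M] {f : ι → M} {b : M}
    (hf : ∑ i, f i = Fintype.card κ • b) (α : ι → κ) :
    (∀ j, ∑ i with α i = j, f i ≤ b) ↔ ∀ j, ∑ i with α i = j, f i = b := by
  refine ⟨fun hle => ?_, fun heq j => (heq j).le⟩
  have htotal : ∑ j, ∑ i with α i = j, f i = ∑ _j : κ, b := by
    rw [Finset.sum_fiberwise, hf, Finset.sum_const, Finset.card_univ]
  simpa using (Finset.sum_eq_sum_iff_of_le fun j _ => hle j).1 htotal

namespace DeliveryInstance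

section

variable {I : DeliveryInstance}

theorem Anc.refl (v : I.V) : I.Anc v v := ⟨0, rfl⟩

theorem Anc.trans {u v x : I.V} : I.Anc u v → I.Anc v x → I.Anc u x := by
  rintro ⟨k, rfl⟩ ⟨l, rfl⟩
  exact ⟨k + l, Function.iterate_add_apply _ _ _ _⟩

theorem anc_par (v : I.V) : I.Anc (I.par v) v := ⟨1, rfl⟩

theorem cost_le_cost_of_forall_exists_anc {A A' : Set I.V} (h : ∀ v ∈ A, ∃ v' ∈ A', I.Anc v v') :
    I.cost A ≤ I.cost A' := by
  have hedges : {u | u ≠ I.hub ∧ ∃ v ∈ A, I.Anc u v} ⊆ {u | u ≠ I.hub ∧ ∃ v ∈ A', I.Anc u v} := by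
    rintro u ⟨hu, v, hv, huv⟩
    obtain ⟨v', hv', hvv'⟩ := h v hv
    exact ⟨hu, v', hv', huv.trans hvv'⟩
  exact Finset.sum_le_sum fun u _ =>
    Set.indicator_apply_le' (fun hu => (Set.indicator_of_mem (hedges hu) _).ge)
      fun _ => Set.indicator_apply_nonneg fun hu => (I.w_pos u hu.1).le

theorem cost_eq_sum_of_mapsTo_par {A : Finset I.V} (hhub : I.hub ∉ A)
    (hpar : Set.MapsTo I.par A (insert I.hub A)) : I.cost A = ∑ v ∈ A, I.w v := by
  have hclosed : Set.MapsTo I.par (insert I.hub A) (insert I.hub A) := by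
    rintro v (rfl | hv)
    · exact .inl I.par_hub
    · exact hpar hv
  have hedges : {u | u ≠ I.hub ∧ ∃ v ∈ (A : Set I.V), I.Anc u v} = A := by
    ext u
    constructor
    · rintro ⟨hu, v, hv, d, rfl⟩
      exact (hclosed.iterate d (Set.mem_insert_of_mem _ hv)).resolve_left hu
    · exact fun hu => ⟨ne_of_mem_of_not_mem hu hhub, u, hu, .refl u⟩
  rw [cost, hedges, Finset.sum_indicator_subset _ (Finset.subset_univ A)]

theorem MMSshare_le_iff {c : ℝ} :
    I.MMSshare ≤ c ↔ ∃ π : I.V → Fin I.n, ∀ j, I.cost (I.bundle π j) ≤ c := by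
  have hmax (π : I.V → Fin I.n) : I.maxCost π ≤ c ↔ ∀ j, I.cost (I.bundle π j) ≤ c :=
    (Finset.sup'_le_iff _ _).trans (by simp)
  exact (Finset.inf'_le_iff _).trans (by simp [hmax])

end

/-- A description of the topology of `I` as a spider, i.e. as disjoint paths (the legs) attached
to the hub: `order ⟨i, j⟩` is the `j`-th vertex of leg `i`, counted from `0` at the end next to the
hub. A leg is allowed to have no vertices. -/
structure Spider (I : DeliveryInstance) {ι : Type*} (a : ι → ℕ) where
  order : (Σ i, Fin (a i)) ≃ {v : I.V // v ≠ I.hub}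
  par_order_zero : ∀ i (h : 0 < a i), I.par (order ⟨i, 0, h⟩) = I.hub
  par_order_succ : ∀ i j (h : j + 1 < a i),
    I.par (order ⟨i, j + 1, h⟩) = order ⟨i, j, Nat.lt_of_succ_lt h⟩

namespace Spider

variable {I : DeliveryInstance} {ι : Type*} {a : ι → ℕ} (S : I.Spider a)

/-- The set of all orders on the legs in `T`. -/
def legs (T : Finset ι) : Finset I.V :=
  (T.sigma fun _ => Finset.univ).map (S.order.toEmbedding.trans (.subtype _))

/-- The total weight of the edges of leg `i`, including the one joining it to the hub. -/
noncomputable def legWeight (i : ι) : ℝ := ∑ j, I.w (S.order ⟨i, j⟩)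

theorem mem_legs {T : Finset ι} {v : I.V} :
    v ∈ S.legs T ↔ ∃ i ∈ T, ∃ j, (S.order ⟨i, j⟩ : I.V) = v := by
  simp [legs, Sigma.exists]

theorem order_mem_legs {T : Finset ι} {p : Σ i, Fin (a i)} :
    (S.order p : I.V) ∈ S.legs T ↔ p.1 ∈ T :=
  (Finset.mem_map' _).trans (by simp)

theorem hub_notMem_legs (T : Finset ι) : I.hub ∉ S.legs T := by
  rw [mem_legs]
  rintro ⟨i, -, j, h⟩
  exact (S.order ⟨i, j⟩).2 h

theorem mapsTo_par_legs (T : Finset ι) :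
    Set.MapsTo I.par (S.legs T) (insert I.hub (S.legs T)) := by
  intro v hv
  obtain ⟨i, hi, ⟨_ | j, hj⟩, rfl⟩ := S.mem_legs.1 hv
  · exact .inl (S.par_order_zero i hj)
  · exact .inr (S.par_order_succ i j hj ▸ S.order_mem_legs.2 hi)

theorem cost_legs (T : Finset ι) : I.cost (S.legs T) = ∑ i ∈ T, S.legWeight i := by
  rw [cost_eq_sum_of_mapsTo_par (S.hub_notMem_legs T) (S.mapsTo_par_legs T), legs, Finset.sum_map,
    Finset.sum_sigma]
  rfl

theorem legWeight_of_unweighted (hI : I.Unweighted) (i : ι) : S.legWeight i = a i := by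
  simp [legWeight, hI _ (S.order _).2]

theorem anc_order_of_le {i : ι} {j j' : Fin (a i)} (h : j ≤ j') :
    I.Anc (S.order ⟨i, j⟩) (S.order ⟨i, j'⟩) := by
  obtain ⟨j', hj'⟩ := j'
  induction j' with
  | zero =>
    obtain rfl : j = ⟨0, hj'⟩ := Fin.ext (Nat.le_zero.1 h)
    exact .refl _
  | succ m ih =>
    obtain rfl | hlt := h.eq_or_lt
    · exact .refl _
    · have hm : I.Anc (S.order ⟨i, m, Nat.lt_of_succ_lt hj'⟩) (S.order ⟨i, m + 1, hj'⟩) :=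
        S.par_order_succ i m hj' ▸ anc_par _
      exact (ih _ (Nat.le_of_lt_succ hlt)).trans hm

theorem exists_forall_ne_hub_and_anc (i : ι) :
    ∃ t : I.V, ∀ j, t ≠ I.hub ∧ I.Anc (S.order ⟨i, j⟩) t := by
  obtain h | h := (a i).eq_zero_or_pos
  · exact ⟨I.hub, fun j => absurd j.2 (by simp [h])⟩
  · exact ⟨S.order ⟨i, a i - 1, Nat.sub_one_lt_of_lt h⟩, fun j =>
      ⟨(S.order _).2, S.anc_order_of_le (Nat.le_sub_one_of_lt j.2)⟩⟩

variable [Fintype ι]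

theorem exists_bundle_eq_legs (α : ι → Fin I.n) :
    ∃ π : I.V → Fin I.n, ∀ j, I.bundle π j = S.legs {i | α i = j} := by
  refine ⟨fun v => if hv : v ≠ I.hub then α (S.order.symm ⟨v, hv⟩).1 else ⟨0, I.n_pos⟩,
    fun j => Set.ext fun v => ?_⟩
  by_cases hv : v = I.hub
  · simp [bundle, hv, S.hub_notMem_legs]
  · obtain ⟨⟨i, m⟩, h⟩ := S.order.surjective ⟨v, hv⟩
    obtain rfl : (S.order ⟨i, m⟩ : I.V) = v := congrArg Subtype.val h
    simp [bundle, hv, S.order_mem_legs]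

theorem exists_sum_legWeight_le_cost_bundle (π : I.V → Fin I.n) :
    ∃ α : ι → Fin I.n, ∀ j, ∑ i with α i = j, S.legWeight i ≤ I.cost (I.bundle π j) := by
  choose tip htip using S.exists_forall_ne_hub_and_anc
  refine ⟨fun i => π (tip i), fun j => ?_⟩
  rw [← cost_legs]
  refine cost_le_cost_of_forall_exists_anc fun v hv => ?_
  obtain ⟨i, hi, m, rfl⟩ := S.mem_legs.1 hv
  exact ⟨tip i, ⟨(htip i m).1, (Finset.mem_filter.1 hi).2⟩, (htip i m).2⟩

theorem MMSshare_le_iff {c : ℝ} :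
    I.MMSshare ≤ c ↔ ∃ α : ι → Fin I.n, ∀ j, ∑ i with α i = j, S.legWeight i ≤ c := by
  rw [DeliveryInstance.MMSshare_le_iff]
  constructor
  · rintro ⟨π, hπ⟩
    obtain ⟨α, hα⟩ := S.exists_sum_legWeight_le_cost_bundle π
    exact ⟨α, fun j => (hα j).trans (hπ j)⟩
  · rintro ⟨α, hα⟩
    obtain ⟨π, hπ⟩ := S.exists_bundle_eq_legs α
    exact ⟨π, fun j => by rw [hπ, cost_legs]; exact hα j⟩

end Spider

end DeliveryInstance

theorem stmt15_general {I : DeliveryInstance} {ι : Type*} [Fintype ι] {a : ι → ℕ} (S : I.Spider a)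
    {B : ℝ} (hsum : ∑ i, S.legWeight i = I.n * B) :
    I.MMSshare ≤ B ↔ ∃ α : ι → Fin I.n, ∀ j, ∑ i with α i = j, S.legWeight i = B := by
  rw [S.MMSshare_le_iff]
  exact exists_congr (forall_sum_fiber_le_iff_forall_eq (by simpa using hsum))

/-- Let `a₁, …, a_ℓ` be positive integers summing to `k·B`,
and let `I` be the unweighted `k`-agent instance whose topology consists of the
hub together with `ℓ` vertex-disjoint paths, the `i`-th having `aᵢ` vertices
and its first vertex adjacent to the hub.  Then `MMS(I) ≤ B` iff the items can
be assigned to `k` bins each of which receives total size exactly `B`. -/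
theorem stmt15 (k B ℓ : ℕ) (a : Fin ℓ → ℕ)
    (hpos : ∀ i, 0 < a i) (hsum : ∑ i, a i = k * B)
    (I : DeliveryInstance) (hU : I.Unweighted) (hk : I.n = k)
    (e : {v : I.V // v ≠ I.hub} ≃ (Σ i : Fin ℓ, Fin (a i)))
    (hpar0 : ∀ (i : Fin ℓ) (j : Fin (a i)), (j : ℕ) = 0 →
      I.par (e.symm ⟨i, j⟩).1 = I.hub)
    (hpar1 : ∀ (i : Fin ℓ) (j : Fin (a i)), 0 < (j : ℕ) →
      I.par (e.symm ⟨i, j⟩).1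
        = (e.symm ⟨i, ⟨(j : ℕ) - 1, lt_of_le_of_lt (Nat.sub_le _ _) j.isLt⟩⟩).1) :
    I.MMSshare ≤ (B : ℝ) ↔
      ∃ α : Fin ℓ → Fin k,
        ∀ j : Fin k, ∑ i ∈ Finset.univ.filter (fun i => α i = j), a i = B := by
  subst hk
  let S : I.Spider a :=
    ⟨e.symm, fun i h => hpar0 i ⟨0, h⟩ rfl, fun i j h => hpar1 i ⟨j + 1, h⟩ j.succ_pos⟩
  have hmain := stmt15_general S (B := B)
  simp only [S.legWeight_of_unweighted hU] at hmain
  exact_mod_cast hmain (mod_cast hsum)
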